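/- For a simple graph G, π̂_3(G) = 0 if and only if there exists a positive integer s such that G is isomorphic to a subgraph of C₅(1,s,s,s,s) and G is also isomorphic to a subgraph of C₃(s,s,s;{{1,2}}). -/

import Mathlib

/-- A hypergraph `H` (given by its finite collection of hyperedges on vertex type `β`)
contains a Berge copy of the graph `G`: there is an injection of the vertices of `G`
and an injection of the edges of `G` into hyperedges of `H` such that each edge of `G`
is contained in its corresponding hyperedge. -/
def HasBergeCopy {α β : Type*} [DecidableEq β] (G : SimpleGraph α)
    (H : Finset (Finset β)) : Prop :=
  ∃ (i : α → β) (f : Sym2 α → Finset β),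
    Function.Injective i ∧ Set.InjOn f G.edgeSet ∧
    (∀ e ∈ G.edgeSet, f e ∈ H) ∧
    (∀ u v, G.Adj u v → i u ∈ f s(u, v) ∧ i v ∈ f s(u, v))

/-- The edge set of the shadow graph of a hypergraph `H`: all 2-element subsets of
vertices covered by some hyperedge of `H`. -/
def covPairs {β : Type*} [DecidableEq β] (H : Finset (Finset β)) : Finset (Finset β) :=
  H.biUnion fun h => Finset.powersetCard 2 h

/-- The `R`-cover Turán number `êx_R(n, G)`: the maximum number of edges in the shadow
of a Berge-`G`-free `R`-graph on `n` vertices. -/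
noncomputable def coverTuranNumber {α : Type*} (R : Set ℕ) (n : ℕ)
    (G : SimpleGraph α) : ℕ :=
  sSup { m | ∃ H : Finset (Finset (Fin n)),
    (∀ h ∈ H, h.card ∈ R) ∧ ¬ HasBergeCopy G H ∧ m = (covPairs H).card }

/-- The `k`-cover Turán density `π̂_k(G) = limsup_{n → ∞} êx_k(n, G) / C(n,2)`. -/
noncomputable def coverTuranDensity {α : Type*} (k : ℕ) (G : SimpleGraph α) : ℝ :=
  Filter.limsup
    (fun n : ℕ => (coverTuranNumber {k} n G : ℝ) / (n.choose 2 : ℝ)) Filter.atTop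

/-- The blowup `C₅(1, s, s, s, s)` of the 5-cycle `v₁v₂v₃v₄v₅`: `v₁` (the vertex
`Sum.inl ()`) stays a single vertex, each other `vᵢ` is replaced by an independent set
of size `s`, and every edge of the 5-cycle becomes a complete bipartite graph. -/
def C5Blowup (s : ℕ) : SimpleGraph (Unit ⊕ Fin 4 × Fin s) :=
  SimpleGraph.fromRel (fun x y =>
    match x, y with
    | Sum.inl _, Sum.inl _ => False
    | Sum.inl _, Sum.inr (i, _) => i = 0 ∨ i = 3
    | Sum.inr _, Sum.inl _ => False
    | Sum.inr (i, _), Sum.inr (i', _) => (i : ℕ) + 1 = (i' : ℕ))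

/-- The generalized blowup `C₃(s, s, s; {{1,2}})` of the triangle `v₁v₂v₃`: each `vᵢ`
is replaced by an independent set of size `s`, the edges `v₁v₃` and `v₂v₃` become
complete bipartite graphs, and the edge `v₁v₂` becomes a perfect matching. -/
def C3BlowupM (s : ℕ) : SimpleGraph (Fin 3 × Fin s) :=
  SimpleGraph.fromRel (fun x y =>
    (x.1 = 0 ∧ y.1 = 2) ∨ (x.1 = 1 ∧ y.1 = 2) ∨ (x.1 = 0 ∧ y.1 = 1 ∧ x.2 = y.2))


lemma berge_of_rel {α β : Type*} [DecidableEq β] (G : SimpleGraph α) (H : Finset (Finset β))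
    (i : α → β) (hi : Function.Injective i) (R : α → α → Prop) (φ : α → α → Finset β)
    (hR : ∀ u v, G.Adj u v → R u v ∨ R v u)
    (hφ : ∀ u v, R u v → φ u v ∈ H ∧ i u ∈ φ u v ∧ i v ∈ φ u v)
    (hinj : ∀ u v u' v', R u v → R u' v' → φ u v = φ u' v' → s(u, v) = s(u', v')) :
    HasBergeCopy G H := by
  classical
  have key : ∀ e : Sym2 α, ∃ h : Finset β, e ∈ G.edgeSet →
      ∃ u v, s(u, v) = e ∧ R u v ∧ h = φ u v := by
    intro e
    by_cases he : e ∈ G.edgeSet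
    · induction e with
      | _ x y =>
        rcases hR x y he with h | h
        · exact ⟨φ x y, fun _ => ⟨x, y, rfl, h, rfl⟩⟩
        · exact ⟨φ y x, fun _ => ⟨y, x, Sym2.eq_swap, h, rfl⟩⟩
    · exact ⟨∅, fun h => absurd h he⟩
  choose f hf using key
  refine ⟨i, f, hi, ?_, ?_, ?_⟩
  · intro e he e' he' h
    obtain ⟨u, v, rfl, h1, h2⟩ := hf e he
    obtain ⟨u', v', rfl, h1', h2'⟩ := hf e' he'
    exact hinj _ _ _ _ h1 h1' (by rw [← h2, ← h2', h])
  · intro e he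
    obtain ⟨u, v, rfl, h1, h2⟩ := hf e he
    rw [h2]; exact (hφ _ _ h1).1
  · intro x y hxy
    obtain ⟨u, v, huv, h1, h2⟩ := hf s(x, y) hxy
    rw [h2]
    have := (hφ _ _ h1).2
    rcases Sym2.eq_iff.1 huv with ⟨rfl, rfl⟩ | ⟨rfl, rfl⟩
    · exact this
    · exact this.symm

lemma berge_mono {α α' β : Type*} [DecidableEq β] {G : SimpleGraph α} {G' : SimpleGraph α'}
    {H : Finset (Finset β)} (g : G →g G') (hg : Function.Injective g)
    (h : HasBergeCopy G' H) : HasBergeCopy G H := by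
  obtain ⟨i, f, hi, hf, hH, hm⟩ := h
  refine ⟨i ∘ g, fun e => f (Sym2.map g e), hi.comp hg, ?_, ?_, ?_⟩
  · intro e he e' he' h
    exact Sym2.map.injective hg (hf (g.map_mem_edgeSet he) (g.map_mem_edgeSet he') h)
  · intro e he
    exact hH _ (g.map_mem_edgeSet he)
  · intro u v huv
    exact hm _ _ (g.map_adj huv)

open Classical in
lemma pigeon_set {ι ω : Type*} (I : Finset ι) (Ω : Finset ω) (R : ι → ω → Prop) (δ : ℝ)
    (s : ℕ) (hI : 0 < I.card) (hsI : s ≤ I.card)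
    (h : ∀ i ∈ I, δ * Ω.card ≤ ((Ω.filter (R i)).card : ℝ)) (hs : (s : ℝ) ≤ δ / 2 * I.card) :
    ∃ S ⊆ I, S.card = s ∧
      δ / 2 * Ω.card ≤ 2 ^ I.card * ((Ω.filter (fun w => ∀ i ∈ S, R i w)).card : ℝ) := by
  set d : ω → ℕ := fun w => (I.filter (fun i => R i w)).card with hd
  set Ω' := Ω.filter (fun w => s ≤ d w) with hΩ'
  have h1 : ∑ i ∈ I, (Ω.filter (R i)).card = ∑ w ∈ Ω, d w := by
    simp only [hd, Finset.card_filter]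
    exact Finset.sum_comm
  have h2 : δ * Ω.card * I.card ≤ ∑ w ∈ Ω, (d w : ℝ) := by
    have : δ * Ω.card * I.card ≤ ∑ i ∈ I, ((Ω.filter (R i)).card : ℝ) := by
      have := Finset.card_nsmul_le_sum I _ _ h
      simp only [nsmul_eq_mul] at this
      linarith
    refine this.trans (le_of_eq ?_)
    exact_mod_cast h1
  have h3 : ∑ w ∈ Ω, (d w : ℝ) ≤ I.card * Ω'.card + s * Ω.card := by
    have : ∀ w ∈ Ω, (d w : ℝ) ≤ (if s ≤ d w then (I.card : ℝ) else 0) + s := by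
      intro w _
      have : d w ≤ I.card := Finset.card_filter_le _ _
      split_ifs with h
      · have : (d w : ℝ) ≤ I.card := by exact_mod_cast this
        have : (0 : ℝ) ≤ s := by positivity
        linarith
      · have : (d w : ℝ) ≤ s := by exact_mod_cast (by omega : d w ≤ s)
        linarith
    refine (Finset.sum_le_sum this).trans (le_of_eq ?_)
    rw [Finset.sum_add_distrib, ← Finset.sum_filter]
    simp [hΩ', mul_comm]
  have hIr : (0 : ℝ) < I.card := by exact_mod_cast hI
  have h4 : δ / 2 * Ω.card ≤ Ω'.card := by
    have : (s : ℝ) * Ω.card ≤ δ / 2 * I.card * Ω.card := by gcongr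
    have : (I.card : ℝ) * (δ / 2 * Ω.card) ≤ I.card * Ω'.card := by nlinarith
    exact le_of_mul_le_mul_left this hIr
  set W : Finset ι → Finset ω := fun S => Ω.filter (fun w => ∀ i ∈ S, R i w) with hW
  have hne : (Finset.powersetCard s I).Nonempty := Finset.powersetCard_nonempty.2 hsI
  obtain ⟨S, hS, hmax⟩ := Finset.exists_max_image _ (fun S => (W S).card) hne
  rw [Finset.mem_powersetCard] at hS
  refine ⟨S, hS.1, hS.2, h4.trans ?_⟩
  have h5 : Ω' ⊆ (Finset.powersetCard s I).biUnion W := by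
    intro w hw
    rw [hΩ', Finset.mem_filter] at hw
    obtain ⟨T, hT, hTc⟩ := Finset.exists_subset_card_eq hw.2
    refine Finset.mem_biUnion.2 ⟨T, ?_, ?_⟩
    · exact Finset.mem_powersetCard.2 ⟨hT.trans (Finset.filter_subset _ _), hTc⟩
    · exact Finset.mem_filter.2 ⟨hw.1, fun i hi => (Finset.mem_filter.1 (hT hi)).2⟩
  have h6 : Ω'.card ≤ 2 ^ I.card * (W S).card := by
    calc Ω'.card ≤ _ := Finset.card_le_card h5
      _ ≤ (Finset.powersetCard s I).card * (W S).card := Finset.card_biUnion_le_card_mul _ _ _ hmax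
      _ ≤ _ := by
        gcongr
        rw [← Finset.card_powerset]
        refine Finset.card_le_card ?_
        intro T hT
        exact Finset.mem_powerset.2 (Finset.mem_powersetCard.1 hT).1
  exact_mod_cast h6

open Classical in
lemma kst (ε : ℝ) (hε : 0 < ε) (N : ℕ) : ∃ n0 : ℕ, ∀ (V : Type) [Fintype V],
    n0 ≤ Fintype.card V → ∀ E : Finset (V × V), ε * (Fintype.card V : ℝ) ^ 2 ≤ E.card →
    ∃ S T : Finset V, S.card = N ∧ T.card = N ∧ ∀ a ∈ S, ∀ b ∈ T, (a, b) ∈ E := by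
  obtain ⟨M, hM⟩ := exists_nat_ge (4 * N / ε + N + 1)
  obtain ⟨n0, hn0⟩ := exists_nat_ge (2 * M / ε + 4 * 2 ^ M * N / ε + 1)
  refine ⟨n0, fun V _ hV E hE => ?_⟩
  set n := Fintype.card V with hn
  have hnr : 2 * M / ε + 4 * 2 ^ M * N / ε + 1 ≤ (n : ℝ) := hn0.trans (by exact_mod_cast hV)
  have p1 : 0 ≤ 2 * M / ε := by positivity
  have p2 : 0 ≤ 4 * 2 ^ M * N / ε := by positivity
  have p3 : 0 ≤ 4 * N / ε := by positivity
  have hnpos : (0 : ℝ) < n := by linarith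
  set nb : V → Finset V := fun a => Finset.univ.filter (fun b => (a, b) ∈ E) with hnb
  set hi : Finset V := Finset.univ.filter (fun a => ε / 2 * n ≤ (nb a).card) with hhi
  have hEc : E.card = ∑ a, (nb a).card := by
    rw [Finset.card_eq_sum_card_fiberwise (f := Prod.fst) (t := Finset.univ) (by simp)]
    refine Finset.sum_congr rfl fun a _ => ?_
    refine Finset.card_bij' (fun p _ => p.2) (fun b _ => (a, b)) ?_ ?_ ?_ ?_
    · rintro ⟨x, y⟩ hp
      obtain ⟨h1, rfl⟩ := Finset.mem_filter.1 hp
      simpa [hnb] using h1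
    · simp [hnb]
    · rintro ⟨x, y⟩ hp
      obtain ⟨h1, rfl⟩ := Finset.mem_filter.1 hp
      rfl
    · simp
  have hE2 : (E.card : ℝ) ≤ n * hi.card + ε / 2 * n * n := by
    rw [hEc]; push_cast
    have : ∀ a ∈ (Finset.univ : Finset V), ((nb a).card : ℝ) ≤
        (if ε / 2 * n ≤ (nb a).card then (n : ℝ) else 0) + ε / 2 * n := by
      intro a _
      have h0 : ((nb a).card : ℝ) ≤ n := by exact_mod_cast Finset.card_le_univ _
      split_ifs with h
      · have : 0 ≤ ε / 2 * n := by positivity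
        linarith
      · linarith
    refine (Finset.sum_le_sum this).trans (le_of_eq ?_)
    rw [Finset.sum_add_distrib, ← Finset.sum_filter]
    simp [hhi, hn, mul_comm]
  have hhic : ε / 2 * n ≤ hi.card := by
    have : (n : ℝ) * (ε / 2 * n) ≤ n * hi.card := by nlinarith
    exact le_of_mul_le_mul_left this hnpos
  have hMhi : M ≤ hi.card := by
    have : (M : ℝ) ≤ ε / 2 * n := by
      have : 2 * M / ε ≤ n := by linarith
      rw [div_le_iff₀ hε] at this
      linarith
    exact_mod_cast this.trans hhic
  obtain ⟨I, hIhi, hIM⟩ := Finset.exists_subset_card_eq hMhi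
  have hNM : N + 1 ≤ M := by
    have : (N : ℝ) + 1 ≤ M := by linarith
    exact_mod_cast this
  obtain ⟨S, hSI, hSN, hS⟩ := pigeon_set I (Finset.univ : Finset V) (fun a b => (a, b) ∈ E) (ε / 2) N
    (by omega) (by omega)
    (fun a ha => by
      have := (Finset.mem_filter.1 (hIhi ha)).2
      convert this
      exact Finset.card_univ) (by
      rw [hIM]
      have : 4 * N / ε ≤ M := by linarith
      rw [div_le_iff₀ hε] at this
      linarith)
  set T' := Finset.univ.filter (fun b : V => ∀ a ∈ S, (a, b) ∈ E) with hT'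
  have hT : N ≤ T'.card := by
    have h1 : 4 * 2 ^ M * N / ε ≤ n := by linarith
    rw [div_le_iff₀ hε] at h1
    rw [hIM, Finset.card_univ, ← hn] at hS
    have hS' : ε / 2 / 2 * ↑n ≤ 2 ^ M * (T'.card : ℝ) := by convert hS
    have h2 : (2 : ℝ) ^ M * N ≤ 2 ^ M * T'.card := by linarith
    have h3 : (N : ℝ) ≤ T'.card := le_of_mul_le_mul_left h2 (by positivity)
    exact_mod_cast h3
  obtain ⟨T, hTT, hTN⟩ := Finset.exists_subset_card_eq hT
  exact ⟨S, T, hSN, hTN, fun a ha b hb => (Finset.mem_filter.1 (hTT hb)).2 a ha⟩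

open Classical in
lemma good_edges {V : Type} [Fintype V] (E : Finset (V × V)) (ε : ℝ) (hε : 0 < ε)
    (hn : 0 < Fintype.card V) (hE : ε * (Fintype.card V : ℝ) ^ 2 ≤ E.card) :
    ε ^ 4 / 2 * (Fintype.card V : ℝ) ^ 2 ≤ ((E.filter (fun e => ε ^ 4 / 2 * (Fintype.card V : ℝ) ^ 2 ≤
      ((E.filter (fun p => (e.1, p.2) ∈ E ∧ (p.1, e.2) ∈ E)).card : ℝ))).card : ℝ) := by
  set n := Fintype.card V with hnn
  have hnr : (0 : ℝ) < n := by exact_mod_cast hn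
  set x : V → V → ℝ := fun a b => if (a, b) ∈ E then 1 else 0 with hx
  set wk : V × V → ℕ := fun e => (E.filter (fun p => (e.1, p.2) ∈ E ∧ (p.1, e.2) ∈ E)).card with hwk
  have hxx : ∀ a b, x a b * x a b = x a b := by intro a b; simp only [hx]; split_ifs <;> simp
  have hT : (E.card : ℝ) = ∑ b, ∑ a, x a b := by
    rw [Finset.sum_comm, ← Fintype.sum_prod_type' (f := x)]
    simp [hx]
  have hwk' : ∀ e, (wk e : ℝ) = ∑ a', ∑ b', x a' b' * (x e.1 b' * x a' e.2) := by
    intro e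
    rw [← Fintype.sum_prod_type' (f := fun a' b' => x a' b' * (x e.1 b' * x a' e.2))]
    simp only [hwk, hx]
    rw [Finset.card_filter]
    push_cast
    rw [← Finset.sum_filter_add_sum_filter_not Finset.univ (fun p : V × V => p ∈ E)]
    rw [Finset.sum_eq_zero (s := Finset.univ.filter (fun p : V × V => ¬ p ∈ E))]
    · simp only [Finset.filter_univ_mem, add_zero]
      refine Finset.sum_congr rfl fun p hp => ?_
      simp only [Prod.mk.eta, hp, if_true, one_mul]
      split_ifs <;> simp_all
    · intro p hp
      simp [(Finset.mem_filter.1 hp).2]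
  have hW : ∑ e ∈ E, (wk e : ℝ) = ∑ q : V × V, (∑ b, x q.1 b * x q.2 b) ^ 2 := by
    have : ∑ e ∈ E, (wk e : ℝ) = ∑ a, ∑ b, x a b * ∑ a', ∑ b', x a' b' * (x a b' * x a' b) := by
      rw [← Fintype.sum_prod_type' (f := fun a b => x a b * ∑ a', ∑ b', x a' b' * (x a b' * x a' b))]
      rw [← Finset.sum_filter_add_sum_filter_not Finset.univ (fun p : V × V => p ∈ E)]
      rw [Finset.sum_eq_zero (s := Finset.univ.filter (fun p : V × V => ¬ p ∈ E))]
      · simp only [Finset.filter_univ_mem, add_zero]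
        refine Finset.sum_congr rfl fun p hp => ?_
        rw [hwk']
        simp [hx, hp]
      · intro p hp
        simp [hx, (Finset.mem_filter.1 hp).2]
    rw [this, Fintype.sum_prod_type]
    refine Finset.sum_congr rfl fun a _ => ?_
    simp only [Finset.mul_sum]
    rw [Finset.sum_comm]
    refine Finset.sum_congr rfl fun a' _ => ?_
    rw [sq, Finset.sum_mul_sum]
    refine Finset.sum_congr rfl fun b _ => Finset.sum_congr rfl fun b' _ => ?_
    ring
  have c1 : (E.card : ℝ) ^ 2 ≤ n * ∑ b, (∑ a, x a b) ^ 2 := by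
    rw [hT]
    simpa [hnn] using sq_sum_le_card_mul_sum_sq (s := (Finset.univ : Finset V))
      (f := fun b => ∑ a, x a b)
  have hQ : ∑ b, (∑ a, x a b) ^ 2 = ∑ q : V × V, ∑ b, x q.1 b * x q.2 b := by
    rw [Finset.sum_comm]
    refine Finset.sum_congr rfl fun b _ => ?_
    rw [Fintype.sum_prod_type, sq, Finset.sum_mul_sum]
  have c2 : (∑ q : V × V, ∑ b, x q.1 b * x q.2 b) ^ 2 ≤ n ^ 2 * ∑ e ∈ E, (wk e : ℝ) := by
    rw [hW]
    simpa [hnn, sq] using sq_sum_le_card_mul_sum_sq (s := (Finset.univ : Finset (V × V)))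
      (f := fun q => ∑ b, x q.1 b * x q.2 b)
  rw [hQ] at c1
  set Q := ∑ q : V × V, ∑ b, x q.1 b * x q.2 b
  set W := ∑ e ∈ E, (wk e : ℝ) with hWdef
  have d1 : ε ^ 2 * n ^ 3 ≤ Q := by
    have : (ε * (n : ℝ) ^ 2) ^ 2 ≤ n * Q := (pow_le_pow_left₀ (by positivity) hE 2).trans c1
    refine le_of_mul_le_mul_left ?_ hnr
    calc (n : ℝ) * (ε ^ 2 * n ^ 3) = (ε * (n : ℝ) ^ 2) ^ 2 := by ring
      _ ≤ _ := this
  have d2 : ε ^ 4 * n ^ 4 ≤ W := by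
    have : (ε ^ 2 * (n : ℝ) ^ 3) ^ 2 ≤ n ^ 2 * W := (pow_le_pow_left₀ (by positivity) d1 2).trans c2
    refine le_of_mul_le_mul_left ?_ (by positivity : (0 : ℝ) < n ^ 2)
    calc (n : ℝ) ^ 2 * (ε ^ 4 * n ^ 4) = (ε ^ 2 * (n : ℝ) ^ 3) ^ 2 := by ring
      _ ≤ _ := this
  have hEn : (E.card : ℝ) ≤ n ^ 2 := by
    have : E.card ≤ n ^ 2 := (Finset.card_le_univ E).trans (by simp [hnn, sq])
    exact_mod_cast this
  set E' := E.filter (fun e => ε ^ 4 / 2 * (n : ℝ) ^ 2 ≤ (wk e : ℝ)) with hE'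
  have d3 : W ≤ n ^ 2 * E'.card + ε ^ 4 / 2 * n ^ 2 * E.card := by
    have : ∀ e ∈ E, (wk e : ℝ) ≤
        (if ε ^ 4 / 2 * (n : ℝ) ^ 2 ≤ wk e then (n : ℝ) ^ 2 else 0) + ε ^ 4 / 2 * n ^ 2 := by
      intro e _
      have h0 : (wk e : ℝ) ≤ n ^ 2 := by
        refine le_trans ?_ hEn
        exact_mod_cast Finset.card_filter_le _ _
      split_ifs with h
      · have : 0 ≤ ε ^ 4 / 2 * (n : ℝ) ^ 2 := by positivity
        linarith
      · linarith
    refine (Finset.sum_le_sum this).trans (le_of_eq ?_)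
    rw [Finset.sum_add_distrib, ← Finset.sum_filter]
    simp [hE', mul_comm]
  have d4 : ε ^ 4 / 2 * (n : ℝ) ^ 2 * E.card ≤ ε ^ 4 / 2 * n ^ 2 * n ^ 2 := by gcongr
  refine le_of_mul_le_mul_left ?_ (by positivity : (0 : ℝ) < n ^ 2)
  have : (n : ℝ) ^ 2 * (ε ^ 4 / 2 * n ^ 2) = ε ^ 4 * n ^ 4 - ε ^ 4 / 2 * n ^ 2 * n ^ 2 := by ring
  rw [this]
  linarith

lemma triple_inj {V : Type*} [DecidableEq V] (f : V → Fin 3) {t0 t1 t2 : Fin 3}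
    (h01 : t0 ≠ t1) (h02 : t0 ≠ t2) (h12 : t1 ≠ t2) {u w x u' w' x' : V}
    (hu : f u = t0) (hw : f w = t1) (hx : f x = t2)
    (hu' : f u' = t0) (hw' : f w' = t1) (hx' : f x' = t2)
    (h : ({u, w, x} : Finset V) = {u', w', x'}) : u = u' ∧ w = w' := by
  have m1 : u ∈ ({u', w', x'} : Finset V) := by rw [← h]; simp
  have m2 : w ∈ ({u', w', x'} : Finset V) := by rw [← h]; simp
  simp only [Finset.mem_insert, Finset.mem_singleton] at m1 m2
  constructor
  · rcases m1 with m | m | m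
    · exact m
    · exact absurd (by rw [← hu, m, hw']) h01
    · exact absurd (by rw [← hu, m, hx']) h02
  · rcases m2 with m | m | m
    · exact absurd (by rw [← hw, m, hu']) h01
    · exact m
    · exact absurd (by rw [← hw, m, hx']) h12

def C5Rel (s : ℕ) (x y : Unit ⊕ Fin 4 × Fin s) : Prop :=
  (∃ j, x = Sum.inl () ∧ y = Sum.inr (0, j)) ∨ (∃ j, x = Sum.inl () ∧ y = Sum.inr (3, j)) ∨
  (∃ j j', x = Sum.inr (0, j) ∧ y = Sum.inr (1, j')) ∨
  (∃ j j', x = Sum.inr (1, j) ∧ y = Sum.inr (2, j')) ∨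
  (∃ j j', x = Sum.inr (2, j) ∧ y = Sum.inr (3, j'))

lemma C5_adj_cases (s : ℕ) (x y : Unit ⊕ Fin 4 × Fin s) (h : (C5Blowup s).Adj x y) :
    C5Rel s x y ∨ C5Rel s y x := by
  rcases x with ⟨⟩ | ⟨k, j⟩ <;> rcases y with ⟨⟩ | ⟨k', j'⟩
  · simp at h
  · fin_cases k' <;> simp [C5Blowup, C5Rel] at h ⊢
  · fin_cases k <;> simp [C5Blowup, C5Rel] at h ⊢
  · fin_cases k <;> fin_cases k' <;> simp [C5Blowup, C5Rel] at h ⊢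

lemma C5_triangle_free (s : ℕ) (x y z : Unit ⊕ Fin 4 × Fin s) (h1 : (C5Blowup s).Adj x y)
    (h2 : (C5Blowup s).Adj y z) (h3 : (C5Blowup s).Adj x z) : False := by
  rcases x with ⟨⟩ | ⟨k, j⟩ <;> rcases y with ⟨⟩ | ⟨k', j'⟩ <;> rcases z with ⟨⟩ | ⟨k'', j''⟩ <;>
    simp [C5Blowup] at h1 h2 h3 <;> omega

lemma berge_C5 {V : Type*} [DecidableEq V] (H : Finset (Finset V)) (E : V → V → Prop)
    (c : V → V → V) (f : V → Fin 3) (t0 t1 t2 : Fin 3)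
    (h01 : t0 ≠ t1) (h02 : t0 ≠ t2) (h12 : t1 ≠ t2)
    (hE : ∀ u w, E u w → f u = t0 ∧ f w = t1 ∧ f (c u w) = t2 ∧ ({u, w, c u w} : Finset V) ∈ H)
    (v : V) (s : ℕ) (a b : Fin 3 × Fin s → V) (ha : Function.Injective a)
    (hb : Function.Injective b) (hv : f v = t2)
    (e0 : ∀ i, E (a (0, i)) (b (0, i)) ∧ c (a (0, i)) (b (0, i)) = v)
    (e1 : ∀ i, E (a (1, i)) (b (1, i)) ∧ c (a (1, i)) (b (1, i)) = v)
    (e2 : ∀ j k, E (a (2, j)) (b (2, k)))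
    (e02 : ∀ i j, E (a (0, i)) (b (2, j)))
    (e21 : ∀ j i, E (a (2, j)) (b (1, i))) :
    HasBergeCopy (C5Blowup s) H := by
  let P : Unit ⊕ Fin 4 × Fin s → V := fun x =>
    match x with
    | Sum.inl _ => v
    | Sum.inr (k, j) => ![a (0, j), b (2, j), a (2, j), b (1, j)] k
  let π : (Unit ⊕ Fin 4 × Fin s) → (Unit ⊕ Fin 4 × Fin s) → V × V := fun x y =>
    match x, y with
    | Sum.inl _, Sum.inl _ => (v, v)
    | Sum.inl _, Sum.inr (k, j) => ![(a (0, j), b (0, j)), (v, v), (v, v), (a (1, j), b (1, j))] k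
    | Sum.inr _, Sum.inl _ => (v, v)
    | Sum.inr (k, j), Sum.inr (_, j') =>
      ![(a (0, j), b (2, j')), (a (2, j'), b (2, j)), (a (2, j), b (1, j')), (v, v)] k
  let R := C5Rel s
  have fa0 : ∀ j, f (a (0, j)) = t0 := fun j => (hE _ _ (e0 j).1).1
  have fa2 : ∀ j, f (a (2, j)) = t0 := fun j => (hE _ _ (e2 j j)).1
  have fb1 : ∀ j, f (b (1, j)) = t1 := fun j => (hE _ _ (e1 j).1).2.1
  have fb2 : ∀ j, f (b (2, j)) = t1 := fun j => (hE _ _ (e2 j j)).2.1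
  have hRE : ∀ x y, R x y → E (π x y).1 (π x y).2 := by
    rintro x y (⟨j, rfl, rfl⟩ | ⟨j, rfl, rfl⟩ | ⟨j, j', rfl, rfl⟩ | ⟨j, j', rfl, rfl⟩ |
      ⟨j, j', rfl, rfl⟩)
    · exact (e0 j).1
    · exact (e1 j).1
    · exact e02 j j'
    · exact e2 j' j
    · exact e21 j j'
  refine berge_of_rel _ H P ?_ R (fun x y => {(π x y).1, (π x y).2, c (π x y).1 (π x y).2}) ?_ ?_ ?_
  · rintro (x | ⟨k, j⟩) (y | ⟨k', j'⟩) hxy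
    · rfl
    · exfalso
      have := congrArg f hxy
      fin_cases k' <;> simp [P, hv, fa0, fa2, fb1, fb2, h02, h12, h02.symm, h12.symm] at this
    · exfalso
      have := congrArg f hxy
      fin_cases k <;> simp [P, hv, fa0, fa2, fb1, fb2, h02, h12, h02.symm, h12.symm] at this
    · have := congrArg f hxy
      fin_cases k <;> fin_cases k' <;>
        simp [P, fa0, fa2, fb1, fb2, h01, h01.symm, ha.eq_iff, hb.eq_iff] at this hxy ⊢ <;>
        exact hxy
  · exact fun x y hxy => C5_adj_cases s x y hxy
  · intro x y hxy
    refine ⟨(hE _ _ (hRE x y hxy)).2.2.2, ?_⟩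
    rcases hxy with ⟨j, rfl, rfl⟩ | ⟨j, rfl, rfl⟩ | ⟨j, j', rfl, rfl⟩ | ⟨j, j', rfl, rfl⟩ |
      ⟨j, j', rfl, rfl⟩ <;> simp [P, π, e0, e1]
  · intro x y x' y' h h' heq
    obtain ⟨q1, q2, q3, -⟩ := hE _ _ (hRE x y h)
    obtain ⟨q1', q2', q3', -⟩ := hE _ _ (hRE x' y' h')
    obtain ⟨m1, m2⟩ := triple_inj f h01 h02 h12 q1 q2 q3 q1' q2' q3' heq
    rcases h with ⟨j, rfl, rfl⟩ | ⟨j, rfl, rfl⟩ | ⟨j, j1, rfl, rfl⟩ | ⟨j, j1, rfl, rfl⟩ |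
      ⟨j, j1, rfl, rfl⟩ <;>
    rcases h' with ⟨i, rfl, rfl⟩ | ⟨i, rfl, rfl⟩ | ⟨i, i1, rfl, rfl⟩ | ⟨i, i1, rfl, rfl⟩ |
      ⟨i, i1, rfl, rfl⟩ <;>
    simp [π, ha.eq_iff, hb.eq_iff] at m1 m2 <;> simp [m1, m2]

lemma berge_C3 {α V : Type*} [DecidableEq V] (G : SimpleGraph α) (H : Finset (Finset V))
    (htri : ∀ x y z, G.Adj x y → G.Adj y z → G.Adj x z → False) (s : ℕ)
    (g : G →g C3BlowupM s) (hg : Function.Injective g)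
    (p q r : Fin (2 * s + 1) → V) (hp : Function.Injective p) (hq : Function.Injective q)
    (hr : Function.Injective r) (hpq : ∀ i j, p i ≠ q j) (hpr : ∀ i j, p i ≠ r j)
    (hqr : ∀ i j, q i ≠ r j) (hH : ∀ i j, ({p i, q i, r j} : Finset V) ∈ H) :
    HasBergeCopy G H := by
  classical
  let m : Fin s → Prop := fun j => ∃ x y, g x = (0, j) ∧ g y = (1, j) ∧ G.Adj x y
  let ι : Fin s → Fin (2 * s + 1) := fun j => ⟨j, by omega⟩
  let σ : Fin s → Fin (2 * s + 1) := fun j => if m j then ⟨j, by omega⟩ else ⟨s + j, by omega⟩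
  let z : Fin (2 * s + 1) := ⟨2 * s, by omega⟩
  have hι : Function.Injective ι := by
    intro i j h
    simp only [ι, Fin.mk.injEq] at h
    exact Fin.ext h
  have hσ : Function.Injective σ := by
    intro i j h
    have := congrArg Fin.val h
    simp only [σ] at this
    split_ifs at this <;> simp at this <;> first | exact Fin.ext (by omega) | (exfalso; omega)
  have hισ : ∀ i j, ι i = σ j → i = j ∧ m j := by
    intro i j h
    have := congrArg Fin.val h
    simp only [σ, ι] at this
    split_ifs at this with hm <;> simp at this
    · exact ⟨Fin.ext this, hm⟩
    · exfalso; omega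
  have hιz : ∀ i, ι i ≠ z := by
    intro i h
    have := congrArg Fin.val h
    simp only [ι, z] at this
    omega
  let P : α → V := fun x => ![p (ι (g x).2), q (σ (g x).2), r (ι (g x).2)] (g x).1
  let R : α → α → Prop := fun x y => G.Adj x y ∧
    (((g x).1 = 0 ∧ (g y).1 = 2) ∨ ((g x).1 = 1 ∧ (g y).1 = 2) ∨
      ((g x).1 = 0 ∧ (g y).1 = 1 ∧ (g x).2 = (g y).2))
  let π : α → α → Fin (2 * s + 1) × Fin (2 * s + 1) := fun x y =>
    (if (g x).1 = 0 then ι (g x).2 else σ (g x).2, if (g y).1 = 2 then ι (g y).2 else z)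
  have hinj : ∀ i j i' j', ({p i, q i, r j} : Finset V) = {p i', q i', r j'} → i = i' ∧ j = j' := by
    intro i j i' j' h
    have m1 : p i ∈ ({p i', q i', r j'} : Finset V) := by rw [← h]; simp
    have m2 : r j ∈ ({p i', q i', r j'} : Finset V) := by rw [← h]; simp
    simp only [Finset.mem_insert, Finset.mem_singleton] at m1 m2
    refine ⟨?_, ?_⟩
    · rcases m1 with m | m | m
      · exact hp m
      · exact absurd m (hpq _ _)
      · exact absurd m (hpr _ _)
    · rcases m2 with m | m | m
      · exact absurd m.symm (hpr _ _)
      · exact absurd m.symm (hqr _ _)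
      · exact hr m
  refine berge_of_rel _ H P ?_ R (fun x y => {p (π x y).1, q (π x y).1, r (π x y).2}) ?_ ?_ ?_
  · intro x y hxy
    apply hg
    simp only [P] at hxy
    generalize g x = X at hxy ⊢
    generalize g y = Y at hxy ⊢
    obtain ⟨k, i⟩ := X
    obtain ⟨l, j⟩ := Y
    have hqp : ∀ i j, q i ≠ p j := fun i j => (hpq j i).symm
    have hrp : ∀ i j, r i ≠ p j := fun i j => (hpr j i).symm
    have hrq : ∀ i j, r i ≠ q j := fun i j => (hqr j i).symm
    fin_cases k <;> fin_cases l <;>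
      simp [hp.eq_iff, hq.eq_iff, hr.eq_iff, hι.eq_iff, hσ.eq_iff, hpq, hpr, hqr, hqp, hrp, hrq]
        at hxy ⊢ <;> exact hxy
  · intro x y hxy
    obtain ⟨_, h | h⟩ := g.map_adj hxy
    · exact Or.inl ⟨hxy, h⟩
    · exact Or.inr ⟨hxy.symm, h⟩
  · rintro x y ⟨hxy, h⟩
    refine ⟨hH _ _, ?_⟩
    have hm : ∀ j, m j → σ j = ι j := by
      intro j hj
      simp [σ, ι, hj]
    rcases h with ⟨h1, h2⟩ | ⟨h1, h2⟩ | ⟨h1, h2, h3⟩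
    · simp [P, π, h1, h2]
    · simp [P, π, h1, h2]
    · have : m (g y).2 := ⟨x, y, Prod.ext h1 h3, Prod.ext h2 rfl, hxy⟩
      simp [P, π, h1, h2, h3, hm _ this]
  · rintro x y x' y' ⟨hxy, h⟩ ⟨hxy', h'⟩ heq
    obtain ⟨e1, e2⟩ := hinj _ _ _ _ heq
    have fin : ∀ {u w : α}, (g u).1 = (g w).1 → (g u).2 = (g w).2 → u = w :=
      fun h1 h2 => hg (Prod.ext h1 h2)
    have bad : ∀ u v w, (g u).1 = 0 → (g v).1 = 1 → ι (g u).2 = σ (g v).2 → G.Adj u w →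
        G.Adj v w → False := by
      intro u v w h1 h2 h3 h4 h5
      obtain ⟨h6, a, b, ha, hb, hab⟩ := hισ _ _ h3
      have : a = u := hg (by rw [ha]; exact Prod.ext h1.symm h6.symm)
      have : b = v := hg (by rw [hb]; exact Prod.ext h2.symm rfl)
      subst_vars
      exact htri _ _ _ hab h5 h4
    rcases h with ⟨h1, h2⟩ | ⟨h1, h2⟩ | ⟨h1, h2, h3⟩ <;>
    rcases h' with ⟨h1', h2'⟩ | ⟨h1', h2'⟩ | ⟨h1', h2', h3'⟩ <;>
    simp [π, h1, h2, h1', h2', hιz, (hιz _).symm, hι.eq_iff, hσ.eq_iff] at e1 e2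
    · rw [fin (h1.trans h1'.symm) e1, fin (h2.trans h2'.symm) e2]
    · exfalso
      have : y = y' := fin (h2.trans h2'.symm) e2
      subst this
      exact bad _ _ _ h1 h1' e1 hxy hxy'
    · exfalso
      have : y = y' := fin (h2.trans h2'.symm) e2
      subst this
      exact bad _ _ _ h1' h1 e1.symm hxy' hxy
    · rw [fin (h1.trans h1'.symm) e1, fin (h2.trans h2'.symm) e2]
    · rw [fin (h1.trans h1'.symm) e1, fin (h2.trans h2'.symm) (by rw [← h3, ← h3', e1])]

open Classical in
lemma star_lemma (δ : ℝ) (hδ : 0 < δ) (M N : ℕ) (hM : 0 < M) : ∃ n0 : ℕ, ∀ (V : Type) [Fintype V],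
    n0 ≤ Fintype.card V → ∀ (E : Finset (V × V)) (c : V × V → V) (F : V → Finset V),
    (∀ v, (F v).card ≤ M) → (∀ e ∈ E, e.1 ∈ F (c e)) →
    δ * (Fintype.card V : ℝ) ^ 2 ≤ E.card →
    ∃ (S T : Finset V) (a : V → V), S.card = N ∧ T.card = N ∧
      (∀ v ∈ S, ∀ b ∈ T, (a v, b) ∈ E ∧ c (a v, b) = v) ∧
      (Set.InjOn a S ∨ ∃ a0, ∀ v ∈ S, a v = a0) := by
  have hMr : (0 : ℝ) < M := by exact_mod_cast hM
  obtain ⟨n0, hn0⟩ := kst (δ / M) (by positivity) (N * N)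
  refine ⟨n0, fun V _ hV E c F hF hEF hE => ?_⟩
  have h1 : ∀ v, ∃ a, (E.filter (fun e => c e = v)).card ≤
      M * (E.filter (fun e => c e = v ∧ e.1 = a)).card := by
    intro v
    by_cases hne : (F v).Nonempty
    · obtain ⟨a, ha, hmax⟩ := Finset.exists_max_image (F v)
        (fun a => (E.filter (fun e => c e = v ∧ e.1 = a)).card) hne
      refine ⟨a, ?_⟩
      have hsub : E.filter (fun e => c e = v) ⊆
          (F v).biUnion (fun a => E.filter (fun e => c e = v ∧ e.1 = a)) := by
        intro e he
        obtain ⟨he1, rfl⟩ := Finset.mem_filter.1 he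
        exact Finset.mem_biUnion.2 ⟨e.1, hEF e he1, Finset.mem_filter.2 ⟨he1, rfl, rfl⟩⟩
      calc _ ≤ _ := Finset.card_le_card hsub
        _ ≤ _ := Finset.card_biUnion_le_card_mul _ _ _ hmax
        _ ≤ _ := Nat.mul_le_mul_right _ (hF v)
    · refine ⟨v, ?_⟩
      have : E.filter (fun e => c e = v) = ∅ := by
        refine Finset.filter_eq_empty_iff.2 ?_
        rintro e he rfl
        exact hne ⟨_, hEF e he⟩
      simp [this]
  choose a ha using h1
  set Q : Finset (V × V) := Finset.univ.filter (fun p => (a p.1, p.2) ∈ E ∧ c (a p.1, p.2) = p.1) with hQ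
  have h2 : E.card ≤ M * Q.card := by
    rw [Finset.card_eq_sum_card_fiberwise (f := c) (t := Finset.univ) (by simp),
      Finset.card_eq_sum_card_fiberwise (s := Q) (f := Prod.fst) (t := Finset.univ) (by simp),
      Finset.mul_sum]
    refine Finset.sum_le_sum fun v _ => (ha v).trans ?_
    refine Nat.mul_le_mul_left _ ?_
    refine Finset.card_le_card_of_injOn (fun e => (v, e.2)) ?_ ?_
    · rintro ⟨x, y⟩ he
      obtain ⟨h1, h2, rfl⟩ := Finset.mem_filter.1 he
      simp only [Finset.coe_filter, Set.mem_setOf_eq, hQ, Finset.mem_filter, Finset.mem_univ, true_and]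
      exact ⟨⟨h1, h2⟩, trivial⟩
    · rintro ⟨x, y⟩ he ⟨x', y'⟩ he' h
      obtain ⟨h1, h2, h3⟩ := Finset.mem_filter.1 he
      obtain ⟨h1', h2', h3'⟩ := Finset.mem_filter.1 he'
      simp only at h3 h3'
      simp only [Prod.mk.injEq, true_and] at h
      rw [h3, h3', h]
  have h3 : δ / M * (Fintype.card V : ℝ) ^ 2 ≤ Q.card := by
    have : (E.card : ℝ) ≤ M * Q.card := by exact_mod_cast h2
    rw [div_mul_eq_mul_div, div_le_iff₀ hMr]
    linarith
  obtain ⟨S, T, hS, hT, hST⟩ := hn0 V hV Q h3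
  have hST' : ∀ v ∈ S, ∀ b ∈ T, (a v, b) ∈ E ∧ c (a v, b) = v := by
    intro v hv b hb
    simpa [hQ] using hST v hv b hb
  have hNT : N ≤ T.card := by rw [hT]; exact Nat.le_mul_self N
  obtain ⟨T', hT', hTc⟩ := Finset.exists_subset_card_eq hNT
  by_cases hcase : ∃ a0, N ≤ (S.filter (fun v => a v = a0)).card
  · obtain ⟨a0, h0⟩ := hcase
    obtain ⟨S', hS', hSc⟩ := Finset.exists_subset_card_eq h0
    refine ⟨S', T', a, hSc, hTc, ?_, Or.inr ⟨a0, fun v hv => (Finset.mem_filter.1 (hS' hv)).2⟩⟩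
    intro v hv b hb
    exact hST' v (Finset.mem_filter.1 (hS' hv)).1 b (hT' hb)
  · push Not at hcase
    have h4 : N ≤ (S.image a).card := by
      by_contra hlt
      push Not at hlt
      have h5 : S.card ≤ N * (S.image a).card := by
        refine Finset.card_le_mul_card_image S N fun b _ => (hcase b).le
      rw [hS] at h5
      have := Nat.le_of_mul_le_mul_left h5 (by omega)
      omega
    obtain ⟨U, hU, hUc⟩ := Finset.exists_subset_card_eq h4
    have hg : ∀ u, ∃ v, u ∈ U → v ∈ S ∧ a v = u := by
      intro u
      by_cases hu : u ∈ U
      · obtain ⟨v, hv, hvu⟩ := Finset.mem_image.1 (hU hu)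
        exact ⟨v, fun _ => ⟨hv, hvu⟩⟩
      · exact ⟨u, fun h => absurd h hu⟩
    choose g hg using hg
    refine ⟨U.image g, T', a, ?_, hTc, ?_, Or.inl ?_⟩
    · rw [Finset.card_image_of_injOn, hUc]
      intro x hx y hy hxy
      rw [← (hg x hx).2, ← (hg y hy).2, hxy]
    · intro v hv b hb
      obtain ⟨u, hu, rfl⟩ := Finset.mem_image.1 hv
      exact hST' _ (hg u hu).1 b (hT' hb)
    · intro v hv w hw hvw
      obtain ⟨x, hx, rfl⟩ := Finset.mem_image.1 hv
      obtain ⟨y, hy, rfl⟩ := Finset.mem_image.1 hw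
      rw [(hg x hx).2, (hg y hy).2] at hvw
      rw [hvw]

lemma exists_inj_into {ι V : Type*} [Fintype ι] (S : Finset V) (h : Fintype.card ι ≤ S.card) :
    ∃ g : ι → V, Function.Injective g ∧ ∀ i, g i ∈ S := by
  have : Nonempty (ι ↪ S) := Function.Embedding.nonempty_of_card_le (by simpa using h)
  obtain ⟨g⟩ := this
  exact ⟨fun i => (g i : V), fun i j hij => g.injective (Subtype.ext hij), fun i => (g i).2⟩

/-- A family of hyperedges `{p i, q i, r j}`. -/
def TripleFamily {V : Type*} [DecidableEq V] (s : ℕ) (H : Finset (Finset V)) : Prop :=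
  ∃ p q r : Fin (2 * s + 1) → V, Function.Injective p ∧ Function.Injective q ∧
    Function.Injective r ∧ (∀ i j, p i ≠ q j) ∧ (∀ i j, p i ≠ r j) ∧ (∀ i j, q i ≠ r j) ∧
    ∀ i j, ({p i, q i, r j} : Finset V) ∈ H

lemma star_finish (δ : ℝ) (hδ : 0 < δ) (M s : ℕ) (hM : 0 < M) :
    ∃ n0 : ℕ, ∀ (V : Type) [Fintype V] [DecidableEq V],
    n0 ≤ Fintype.card V → ∀ (H : Finset (Finset V)) (E : Finset (V × V)) (c : V × V → V)
    (F : V → Finset V) (f : V → Fin 3) (t0 t1 t2 : Fin 3), t0 ≠ t1 → t0 ≠ t2 → t1 ≠ t2 →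
    (∀ e ∈ E, f e.1 = t0 ∧ f e.2 = t1 ∧ f (c e) = t2 ∧ ({e.1, e.2, c e} : Finset V) ∈ H) →
    (∀ v, (F v).card ≤ M) → (∀ e ∈ E, e.1 ∈ F (c e)) →
    δ * (Fintype.card V : ℝ) ^ 2 ≤ E.card →
    HasBergeCopy (C5Blowup s) H ∨ TripleFamily s H := by
  obtain ⟨n0, hn0⟩ := star_lemma δ hδ M (3 * s + 1) hM
  refine ⟨n0, fun V _ _ hV H E c F f t0 t1 t2 h01 h02 h12 hE hF hEF hEc => ?_⟩
  obtain ⟨S, T, a, hS, hT, hST, hcase⟩ := hn0 V hV E c F hF hEF hEc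
  have hSne : S.Nonempty := Finset.card_pos.1 (by omega)
  have hTne : T.Nonempty := Finset.card_pos.1 (by omega)
  obtain ⟨v0, hv0⟩ := hSne
  obtain ⟨b0, hb0⟩ := hTne
  have fS : ∀ v ∈ S, f v = t2 := by
    intro v hv
    have h := hST v hv b0 hb0
    rw [← h.2]
    exact (hE _ h.1).2.2.1
  have fT : ∀ b ∈ T, f b = t1 := fun b hb => (hE _ (hST v0 hv0 b hb).1).2.1
  have fA : ∀ v ∈ S, f (a v) = t0 := fun v hv => (hE _ (hST v hv b0 hb0).1).1
  have hH : ∀ v ∈ S, ∀ b ∈ T, ({a v, b, v} : Finset V) ∈ H := by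
    intro v hv b hb
    have h := hST v hv b hb
    have := (hE _ h.1).2.2.2
    rwa [h.2] at this
  rcases hcase with hinj | ⟨a0, ha0⟩
  · right
    obtain ⟨p, hp, hpS⟩ := exists_inj_into (ι := Fin (2 * s + 1)) S (by simp; omega)
    obtain ⟨r, hr, hrT⟩ := exists_inj_into (ι := Fin (2 * s + 1)) T (by simp; omega)
    refine ⟨p, a ∘ p, r, hp, ?_, hr, ?_, ?_, ?_, ?_⟩
    · intro i j hij
      exact hp (hinj (hpS i) (hpS j) hij)
    · intro i j h
      have := congrArg f h
      simp only [Function.comp_apply] at this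
      rw [fS _ (hpS i), fA _ (hpS j)] at this
      exact h02 this.symm
    · intro i j h
      have := congrArg f h
      rw [fS _ (hpS i), fT _ (hrT j)] at this
      exact h12 this.symm
    · intro i j h
      have := congrArg f h
      simp only [Function.comp_apply] at this
      rw [fA _ (hpS i), fT _ (hrT j)] at this
      exact h01 this
    · intro i j
      have := hH _ (hpS i) _ (hrT j)
      have h2 : ({p i, (a ∘ p) i, r j} : Finset V) = {a (p i), r j, p i} := by
        ext x; simp; tauto
      rwa [h2]
  · left
    obtain ⟨p, hp, hpS⟩ := exists_inj_into (ι := Fin 3 × Fin s) S (by simp; omega)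
    obtain ⟨r, hr, hrT⟩ := exists_inj_into (ι := Fin 3 × Fin s) T (by simp; omega)
    refine berge_C5 H (fun u w => u ∈ S ∧ w ∈ T) (fun _ _ => a0) f t2 t1 t0 h12.symm h02.symm
      h01.symm ?_ a0 s p r hp hr ?_ ?_ ?_ ?_ ?_ ?_
    · rintro u w ⟨hu, hw⟩
      refine ⟨fS u hu, fT w hw, ?_, ?_⟩
      · rw [← ha0 u hu]; exact fA u hu
      · have := hH u hu w hw
        rw [ha0 u hu] at this
        have h2 : ({u, w, a0} : Finset V) = {a0, w, u} := by
          ext x; simp; tauto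
        rwa [h2]
    · rw [← ha0 v0 hv0]; exact fA v0 hv0
    all_goals intros; simp [hpS, hrT]

open Classical in
lemma max_matching {V : Type} [Fintype V] (E : Finset (V × V)) : ∃ m ⊆ E,
    (∀ e ∈ m, ∀ e' ∈ m, e.1 = e'.1 → e = e') ∧ (∀ e ∈ m, ∀ e' ∈ m, e.2 = e'.2 → e = e') ∧
    ∀ e ∈ E, ∃ e' ∈ m, e.1 = e'.1 ∨ e.2 = e'.2 := by
  set P := E.powerset.filter (fun m => (∀ e ∈ m, ∀ e' ∈ m, e.1 = e'.1 → e = e') ∧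
    (∀ e ∈ m, ∀ e' ∈ m, e.2 = e'.2 → e = e')) with hP
  have hne : P.Nonempty := ⟨∅, by simp [hP]⟩
  obtain ⟨m, hm, hmax⟩ := Finset.exists_max_image P Finset.card hne
  obtain ⟨h1, h2, h3⟩ := Finset.mem_filter.1 hm
  rw [Finset.mem_powerset] at h1
  refine ⟨m, h1, h2, h3, ?_⟩
  intro e he
  by_contra hcon
  push Not at hcon
  have hem : e ∉ m := fun h => (hcon e h).1 rfl
  have : insert e m ∈ P := by
    refine Finset.mem_filter.2 ⟨Finset.mem_powerset.2 (Finset.insert_subset he h1), ?_, ?_⟩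
    · intro x hx y hy hxy
      rcases Finset.mem_insert.1 hx with hx1 | hx1 <;>
        rcases Finset.mem_insert.1 hy with hy1 | hy1
      · rw [hx1, hy1]
      · rw [hx1] at hxy
        exact absurd hxy (hcon y hy1).1
      · rw [hy1] at hxy
        exact absurd hxy.symm (hcon x hx1).1
      · exact h2 x hx1 y hy1 hxy
    · intro x hx y hy hxy
      rcases Finset.mem_insert.1 hx with hx1 | hx1 <;>
        rcases Finset.mem_insert.1 hy with hy1 | hy1
      · rw [hx1, hy1]
      · rw [hx1] at hxy
        exact absurd hxy (hcon y hy1).2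
      · rw [hy1] at hxy
        exact absurd hxy.symm (hcon x hx1).2
      · exact h3 x hx1 y hy1 hxy
  have := hmax _ this
  rw [Finset.card_insert_of_notMem hem] at this
  omega

lemma core (ε : ℝ) (hε : 0 < ε) (s : ℕ) : ∃ n0 : ℕ, ∀ (V : Type) [Fintype V] [DecidableEq V],
    n0 ≤ Fintype.card V → ∀ (H : Finset (Finset V)) (E : Finset (V × V)) (c : V × V → V)
    (f : V → Fin 3),
    (∀ e ∈ E, f e.1 = 0 ∧ f e.2 = 1 ∧ f (c e) = 2 ∧ ({e.1, e.2, c e} : Finset V) ∈ H) →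
    ε * (Fintype.card V : ℝ) ^ 2 ≤ E.card →
    HasBergeCopy (C5Blowup s) H ∨ TripleFamily s H := by
  classical
  set δ := ε ^ 4 / 2 with hδ
  have hδ0 : 0 < δ := by positivity
  obtain ⟨M, hM⟩ := exists_nat_ge (4 * s / δ + 2 * s + 1)
  have p1 : 0 ≤ 4 * s / δ := by positivity
  have hM2 : 2 * s + 1 ≤ M := by
    have : (2 * s + 1 : ℝ) ≤ M := by linarith
    exact_mod_cast this
  obtain ⟨n1, hn1⟩ := star_finish (δ / 2) (by positivity) M s (by omega)
  obtain ⟨n2, hn2⟩ := kst (δ / 2 * ε / 2 ^ M) (by positivity) (3 * s)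
  refine ⟨n1 + n2 + 1, fun V _ _ hV H E c f hE hEc => ?_⟩
  set n := Fintype.card V with hn
  have hgood := good_edges E ε hε (by omega) hEc
  rw [← hn, ← hδ] at hgood
  set E' := E.filter (fun e => δ * (n : ℝ) ^ 2 ≤
      ((E.filter (fun p => (e.1, p.2) ∈ E ∧ (p.1, e.2) ∈ E)).card : ℝ)) with hE'
  have hgood' : δ * (n : ℝ) ^ 2 ≤ E'.card := by convert hgood
  have hE'E : E' ⊆ E := Finset.filter_subset _ _
  choose m hmE hm1 hm2 hmax using fun v => max_matching (E'.filter (fun e => c e = v))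
  by_cases hcase : ∃ v, M ≤ (m v).card
  · left
    obtain ⟨v, hv⟩ := hcase
    obtain ⟨I, hIm, hIM⟩ := Finset.exists_subset_card_eq hv
    have hEn : (E.card : ℝ) ≤ n ^ 2 := by
      have : E.card ≤ n ^ 2 := (Finset.card_le_univ E).trans (by simp [hn, sq])
      exact_mod_cast this
    have hI : ∀ e ∈ I, e ∈ E' ∧ c e = v := fun e he => Finset.mem_filter.1 (hmE v (hIm he))
    obtain ⟨S, hSI, hSc, hS⟩ := pigeon_set I E
      (fun e p => (e.1, p.2) ∈ E ∧ (p.1, e.2) ∈ E) δ (2 * s) (by omega) (by omega)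
      (by
        intro e he
        have h1 := (Finset.mem_filter.1 (hI e he).1).2
        have h2 : δ * (E.card : ℝ) ≤ δ * (n : ℝ) ^ 2 := by gcongr
        refine (h2.trans h1).trans (le_of_eq ?_)
        congr!)
      (by
        rw [hIM]
        have : 4 * s / δ ≤ M := by linarith
        rw [div_le_iff₀ hδ0] at this
        push_cast
        linarith)
    rw [hIM] at hS
    set W := E.filter (fun p => ∀ e ∈ S, (e.1, p.2) ∈ E ∧ (p.1, e.2) ∈ E) with hW
    have hS' : δ / 2 * (E.card : ℝ) ≤ 2 ^ M * (W.card : ℝ) := by convert hS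
    have hWc : δ / 2 * ε / 2 ^ M * (n : ℝ) ^ 2 ≤ W.card := by
      have h1 : δ / 2 * (ε * (n : ℝ) ^ 2) ≤ δ / 2 * E.card := by gcongr
      rw [div_mul_eq_mul_div, div_le_iff₀ (by positivity)]
      linarith
    obtain ⟨A, B, hA, hB, hAB⟩ := hn2 V (by omega) W hWc
    obtain ⟨e, he, heS⟩ := exists_inj_into (ι := Fin 2 × Fin s) S (by simp [hSc])
    obtain ⟨x, hx, hxA⟩ := exists_inj_into (ι := Fin s) (A \ S.image Prod.fst) (by
      have h1 := Finset.le_card_sdiff (S.image Prod.fst) A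
      have h2 := Finset.card_image_le (s := S) (f := Prod.fst)
      simp; omega)
    obtain ⟨y, hy, hyB⟩ := exists_inj_into (ι := Fin s) (B \ S.image Prod.snd) (by
      have h1 := Finset.le_card_sdiff (S.image Prod.snd) B
      have h2 := Finset.card_image_le (s := S) (f := Prod.snd)
      simp; omega)
    have hxA' : ∀ j, x j ∈ A := fun j => (Finset.mem_sdiff.1 (hxA j)).1
    have hyB' : ∀ j, y j ∈ B := fun j => (Finset.mem_sdiff.1 (hyB j)).1
    have hxe : ∀ j k, (e k).1 ≠ x j := fun j k h =>
      (Finset.mem_sdiff.1 (hxA j)).2 (Finset.mem_image.2 ⟨e k, heS k, h⟩)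
    have hye : ∀ j k, (e k).2 ≠ y j := fun j k h =>
      (Finset.mem_sdiff.1 (hyB j)).2 (Finset.mem_image.2 ⟨e k, heS k, h⟩)
    have he1 : ∀ k k', (e k).1 = (e k').1 ↔ k = k' := fun k k' =>
      ⟨fun h => he (hm1 v _ (hIm (hSI (heS k))) _ (hIm (hSI (heS k'))) h), fun h => by rw [h]⟩
    have he2 : ∀ k k', (e k).2 = (e k').2 ↔ k = k' := fun k k' =>
      ⟨fun h => he (hm2 v _ (hIm (hSI (heS k))) _ (hIm (hSI (heS k'))) h), fun h => by rw [h]⟩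
    have hxe' : ∀ j k, x j ≠ (e k).1 := fun j k => (hxe j k).symm
    have hye' : ∀ j k, y j ≠ (e k).2 := fun j k => (hye j k).symm
    have heE : ∀ k, e k ∈ E ∧ c (e k) = v := fun k =>
      ⟨hE'E (hI _ (hSI (heS k))).1, (hI _ (hSI (heS k))).2⟩
    have hWxy : ∀ i j, (x i, y j) ∈ E ∧ ∀ k, ((e k).1, y j) ∈ E ∧ (x i, (e k).2) ∈ E := by
      intro i j
      obtain ⟨h1, h2⟩ := Finset.mem_filter.1 (hAB _ (hxA' i) _ (hyB' j))
      exact ⟨h1, fun k => h2 _ (heS k)⟩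
    by_cases hs : Nonempty (Fin s)
    · obtain ⟨j0⟩ := hs
      refine berge_C5 H (fun u w => (u, w) ∈ E) (fun u w => c (u, w)) f 0 1 2 (by decide)
        (by decide) (by decide) (fun u w h => hE _ h) v s
        (fun k => ![(e (0, k.2)).1, (e (1, k.2)).1, x k.2] k.1)
        (fun k => ![(e (0, k.2)).2, (e (1, k.2)).2, y k.2] k.1) ?_ ?_ ?_ ?_ ?_ ?_ ?_ ?_
      · rintro ⟨k, i⟩ ⟨k', i'⟩ h
        fin_cases k <;> fin_cases k' <;> simp [he1, hxe, hxe', hx.eq_iff] at h ⊢ <;> exact h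
      · rintro ⟨k, i⟩ ⟨k', i'⟩ h
        fin_cases k <;> fin_cases k' <;> simp [he2, hye, hye', hy.eq_iff] at h ⊢ <;> exact h
      · rw [← (heE (0, j0)).2]
        exact (hE _ (heE (0, j0)).1).2.2.1
      · intro i; exact heE (0, i)
      · intro i; exact heE (1, i)
      · intro j k; exact (hWxy j k).1
      · intro i j; exact ((hWxy j0 j).2 (0, i)).1
      · intro j i; exact ((hWxy j j0).2 (1, i)).2
    · -- `s = 0`: the blowup has one vertex and no edges
      have hemp : IsEmpty (Fin s) := not_nonempty_iff.1 hs
      have hvm : 0 < I.card := by omega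
      obtain ⟨e0, he0⟩ := Finset.card_pos.1 hvm
      refine berge_C5 H (fun u w => (u, w) ∈ E) (fun u w => c (u, w)) f 0 1 2 (by decide)
        (by decide) (by decide) (fun u w h => hE _ h) v s (fun k => isEmptyElim k.2)
        (fun k => isEmptyElim k.2) (fun k => isEmptyElim k.2) (fun k => isEmptyElim k.2) ?_
        (fun k => isEmptyElim k) (fun k => isEmptyElim k) (fun k => isEmptyElim k)
        (fun k => isEmptyElim k) (fun k => isEmptyElim k)
      rw [← (hI e0 he0).2]
      exact (hE _ (hE'E (hI e0 he0).1)).2.2.1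
  · push Not at hcase
    set E1 := E'.filter (fun e => e.1 ∈ (m (c e)).image Prod.fst) with hE1
    set E2 := E'.filter (fun e => e.2 ∈ (m (c e)).image Prod.snd) with hE2
    have hcov : E' ⊆ E1 ∪ E2 := by
      intro e he
      obtain ⟨e', he', h | h⟩ := hmax (c e) e (Finset.mem_filter.2 ⟨he, rfl⟩)
      · exact Finset.mem_union_left _ (Finset.mem_filter.2 ⟨he, Finset.mem_image.2 ⟨e', he', h.symm⟩⟩)
      · exact Finset.mem_union_right _ (Finset.mem_filter.2 ⟨he, Finset.mem_image.2 ⟨e', he', h.symm⟩⟩)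
    have hcard : (E'.card : ℝ) ≤ E1.card + E2.card := by
      exact_mod_cast (Finset.card_le_card hcov).trans (Finset.card_union_le _ _)
    by_cases h12 : δ / 2 * (n : ℝ) ^ 2 ≤ E1.card
    · refine hn1 V (by omega) H E1 c (fun v => (m v).image Prod.fst) f 0 1 2 (by decide) (by decide)
        (by decide) ?_ ?_ ?_ h12
      · intro e he
        exact hE e (hE'E (Finset.mem_filter.1 he).1)
      · intro v
        exact Finset.card_image_le.trans (hcase v).le
      · intro e he
        exact (Finset.mem_filter.1 he).2
    · have h21 : δ / 2 * (n : ℝ) ^ 2 ≤ E2.card := by linarith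
      refine hn1 V (by omega) H (E2.image Prod.swap) (fun p => c p.swap)
        (fun v => (m v).image Prod.snd) f 1 0 2 (by decide) (by decide) (by decide) ?_ ?_ ?_ ?_
      · intro p hp
        obtain ⟨e, he, rfl⟩ := Finset.mem_image.1 hp
        obtain ⟨q1, q2, q3, q4⟩ := hE e (hE'E (Finset.mem_filter.1 he).1)
        refine ⟨q2, q1, by simpa using q3, ?_⟩
        have h2 : ({e.swap.1, e.swap.2, c e.swap.swap} : Finset V) = {e.1, e.2, c e} := by
          ext x; simp; tauto
        rwa [h2]
      · intro v
        exact Finset.card_image_le.trans (hcase v).le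
      · intro p hp
        obtain ⟨e, he, rfl⟩ := Finset.mem_image.1 hp
        simpa using (Finset.mem_filter.1 he).2
      · rwa [Finset.card_image_of_injective _ Prod.swap_injective]

lemma pattern_count {V : Type} [Fintype V] [DecidableEq V] (u w x : V) (huw : u ≠ w) (hux : u ≠ x)
    (hwx : w ≠ x) : Fintype.card (V → Fin 3) ≤
    27 * (Finset.univ.filter (fun f : V → Fin 3 => f u = 0 ∧ f w = 1 ∧ f x = 2)).card := by
  have h : Fintype.card (V → Fin 3) ≤ ((Finset.univ : Finset (Fin 3 × Fin 3 × Fin 3)) ×ˢ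
      (Finset.univ.filter (fun f : V → Fin 3 => f u = 0 ∧ f w = 1 ∧ f x = 2))).card := by
    rw [← Finset.card_univ]
    refine Finset.card_le_card_of_injOn (fun f => ((f u, f w, f x),
      Function.update (Function.update (Function.update f u 0) w 1) x 2)) ?_ ?_
    · intro f _
      simp [Function.update_of_ne, huw, hux, hwx]
    · intro f _ g _ hfg
      simp only [Prod.mk.injEq] at hfg
      obtain ⟨⟨h1, h2, h3⟩, h4⟩ := hfg
      funext z
      by_cases z1 : z = u
      · rw [z1, h1]
      by_cases z2 : z = w
      · rw [z2, h2]
      by_cases z3 : z = x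
      · rw [z3, h3]
      have := congrFun h4 z
      simpa [Function.update_of_ne, z1, z2, z3] using this
  rw [Finset.card_product] at h
  simpa using h

lemma tripartition {V : Type} [Fintype V] [DecidableEq V] (P : Finset (V × V)) (c : V × V → V)
    (h : ∀ e ∈ P, e.1 ≠ e.2 ∧ e.1 ≠ c e ∧ e.2 ≠ c e) :
    ∃ f : V → Fin 3, P.card ≤ 27 * (P.filter (fun e => f e.1 = 0 ∧ f e.2 = 1 ∧ f (c e) = 2)).card := by
  classical
  obtain ⟨f, -, hf⟩ := Finset.exists_max_image (Finset.univ : Finset (V → Fin 3))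
    (fun f => (P.filter (fun e => f e.1 = 0 ∧ f e.2 = 1 ∧ f (c e) = 2)).card)
    ⟨fun _ => 0, Finset.mem_univ _⟩
  refine ⟨f, ?_⟩
  have h1 : P.card * Fintype.card (V → Fin 3) ≤ ∑ e ∈ P, 27 *
      (Finset.univ.filter (fun f : V → Fin 3 => f e.1 = 0 ∧ f e.2 = 1 ∧ f (c e) = 2)).card := by
    rw [← smul_eq_mul]
    exact Finset.card_nsmul_le_sum _ _ _ fun e he =>
      pattern_count _ _ _ (h e he).1 (h e he).2.1 (h e he).2.2
  have h2 : ∑ e ∈ P, (Finset.univ.filter (fun f : V → Fin 3 => f e.1 = 0 ∧ f e.2 = 1 ∧ f (c e) = 2)).card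
      = ∑ f : V → Fin 3, (P.filter (fun e => f e.1 = 0 ∧ f e.2 = 1 ∧ f (c e) = 2)).card := by
    simp only [Finset.card_filter]
    exact Finset.sum_comm
  rw [← Finset.mul_sum, h2] at h1
  have h3 := Finset.sum_le_card_nsmul _ _ _ hf
  rw [Finset.card_univ, smul_eq_mul] at h3
  have hpos : 0 < Fintype.card (V → Fin 3) := Fintype.card_pos
  refine Nat.le_of_mul_le_mul_right ?_ hpos
  nlinarith

lemma upper (ε : ℝ) (hε : 0 < ε) {α : Type*} (G : SimpleGraph α) (s : ℕ)
    (g5 : G →g C5Blowup s) (hg5 : Function.Injective g5)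
    (g3 : G →g C3BlowupM s) (hg3 : Function.Injective g3) :
    ∃ n0 : ℕ, ∀ n, n0 ≤ n → ∀ H : Finset (Finset (Fin n)), (∀ h ∈ H, h.card = 3) →
      ε * (n : ℝ) ^ 2 ≤ (covPairs H).card → HasBergeCopy G H := by
  classical
  obtain ⟨n0, hn0⟩ := core (ε / 27) (by positivity) s
  refine ⟨n0, fun n hn H hH hcov => ?_⟩
  set P : Finset (Fin n × Fin n) := Finset.univ.filter
    (fun e => e.1 ≠ e.2 ∧ ∃ h ∈ H, e.1 ∈ h ∧ e.2 ∈ h) with hP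
  have hc : ∀ e : Fin n × Fin n, ∃ x, e ∈ P →
      e.1 ≠ e.2 ∧ e.1 ≠ x ∧ e.2 ≠ x ∧ ({e.1, e.2, x} : Finset (Fin n)) ∈ H := by
    intro e
    by_cases he : e ∈ P
    · obtain ⟨h1, h, hh, h2, h3⟩ := (Finset.mem_filter.1 he).2
      obtain ⟨x, hx⟩ : ∃ x ∈ h, x ∉ ({e.1, e.2} : Finset (Fin n)) := by
        refine Finset.exists_mem_notMem_of_card_lt_card ?_
        rw [hH h hh, Finset.card_pair h1]; omega
      have hx2 := hx.2
      simp only [Finset.mem_insert, Finset.mem_singleton, not_or] at hx2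
      refine ⟨x, fun _ => ⟨h1, Ne.symm hx2.1, Ne.symm hx2.2, ?_⟩⟩
      have : ({e.1, e.2, x} : Finset (Fin n)) = h := by
        refine Finset.eq_of_subset_of_card_le ?_ ?_
        · intro z hz
          simp only [Finset.mem_insert, Finset.mem_singleton] at hz
          rcases hz with rfl | rfl | rfl
          · exact h2
          · exact h3
          · exact hx.1
        · rw [hH h hh, Finset.card_eq_three.2 ⟨e.1, e.2, x, h1, Ne.symm hx2.1, Ne.symm hx2.2, rfl⟩]
      rwa [this]
    · exact ⟨e.1, fun h => absurd h he⟩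
  choose c hc using hc
  have hPc : (covPairs H).card ≤ P.card := by
    refine Finset.card_le_card_of_surjOn (fun e => {e.1, e.2}) ?_
    intro p hp
    obtain ⟨h, hh, hph⟩ := Finset.mem_biUnion.1 (Finset.mem_coe.1 hp)
    obtain ⟨hsub, hcard⟩ := Finset.mem_powersetCard.1 hph
    obtain ⟨x, y, hxy, rfl⟩ := Finset.card_eq_two.1 hcard
    refine ⟨(x, y), ?_, rfl⟩
    simp only [hP, Finset.coe_filter, Set.mem_setOf_eq, Finset.mem_univ, true_and]
    exact ⟨hxy, h, hh, hsub (by simp), hsub (by simp)⟩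
  obtain ⟨f, hf⟩ := tripartition P c (fun e he => ⟨(hc e he).1, (hc e he).2.1, (hc e he).2.2.1⟩)
  set E := P.filter (fun e => f e.1 = 0 ∧ f e.2 = 1 ∧ f (c e) = 2) with hE
  have hEc : ε / 27 * (Fintype.card (Fin n) : ℝ) ^ 2 ≤ E.card := by
    have h1 : ((covPairs H).card : ℝ) ≤ 27 * E.card := by exact_mod_cast hPc.trans hf
    rw [Fintype.card_fin]
    linarith
  rcases hn0 (Fin n) (by simpa using hn) H E c f (by
    intro e he
    obtain ⟨h1, h2, h3, h4⟩ := Finset.mem_filter.1 he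
    exact ⟨h2, h3, h4, (hc e h1).2.2.2⟩) hEc with h | h
  · exact berge_mono g5 hg5 (by convert h)
  · obtain ⟨p, q, r, hp, hq, hr, hpq, hpr, hqr, hpqr⟩ := h
    refine berge_C3 G H ?_ s g3 hg3 p q r hp hq hr hpq hpr hqr (by convert hpqr)
    intro x y z h1 h2 h3
    exact C5_triangle_free s _ _ _ (g5.map_adj h1) (g5.map_adj h2) (g5.map_adj h3)

lemma covPairs_card_le {n : ℕ} (H : Finset (Finset (Fin n))) : (covPairs H).card ≤ n.choose 2 := by
  have : covPairs H ⊆ Finset.powersetCard 2 Finset.univ := by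
    intro p hp
    obtain ⟨h, hh, hph⟩ := Finset.mem_biUnion.1 hp
    exact Finset.mem_powersetCard.2 ⟨Finset.subset_univ _, (Finset.mem_powersetCard.1 hph).2⟩
  simpa using Finset.card_le_card this

lemma bdd_ctn {α : Type*} (n : ℕ) (R : Set ℕ) (G : SimpleGraph α) : BddAbove { m | ∃ H : Finset (Finset (Fin n)),
    (∀ h ∈ H, h.card ∈ R) ∧ ¬ HasBergeCopy G H ∧ m = (covPairs H).card } := by
  refine ⟨n.choose 2, ?_⟩
  rintro m ⟨H, _, _, rfl⟩
  exact covPairs_card_le H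

lemma ctn_le {α : Type*} (n : ℕ) (R : Set ℕ) (G : SimpleGraph α) :
    coverTuranNumber R n G ≤ n.choose 2 := by
  refine csSup_le' ?_
  rintro m ⟨H, _, _, rfl⟩
  exact covPairs_card_le H

/-- transfer to arbitrary finite vertex types -/
lemma le_ctn {α : Type*} {W : Type} [Fintype W] [DecidableEq W] (G : SimpleGraph α)
    (H : Finset (Finset W)) (hH : ∀ h ∈ H, h.card = 3) (hb : ¬ HasBergeCopy G H) :
    (covPairs H).card ≤ coverTuranNumber {3} (Fintype.card W) G := by
  classical
  let φ := Fintype.equivFin W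
  let H' : Finset (Finset (Fin (Fintype.card W))) := H.image (fun h => h.map φ.toEmbedding)
  have hcov : (covPairs H).card ≤ (covPairs H').card := by
    refine Finset.card_le_card_of_injOn (fun p => p.map φ.toEmbedding) ?_ ?_
    · intro p hp
      obtain ⟨h, hh, hph⟩ := Finset.mem_biUnion.1 (Finset.mem_coe.1 hp)
      obtain ⟨hsub, hcard⟩ := Finset.mem_powersetCard.1 hph
      refine Finset.mem_coe.2 (Finset.mem_biUnion.2 ⟨h.map φ.toEmbedding,
        Finset.mem_image.2 ⟨h, hh, rfl⟩, Finset.mem_powersetCard.2 ⟨?_, ?_⟩⟩)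
      · exact Finset.map_subset_map.2 hsub
      · rw [Finset.card_map, hcard]
    · intro p _ q _ h
      exact Finset.map_injective _ h
  refine hcov.trans (le_csSup (bdd_ctn _ _ _) ⟨H', ?_, ?_, rfl⟩)
  · intro h hh
    obtain ⟨k, hk, rfl⟩ := Finset.mem_image.1 hh
    simp [hH k hk]
  · rintro ⟨i, f, hi, hf, hfH, hm⟩
    refine hb ⟨fun a => φ.symm (i a), fun e => (f e).map φ.symm.toEmbedding,
      φ.symm.injective.comp hi, ?_, ?_, ?_⟩
    · intro e he e' he' h
      exact hf he he' (Finset.map_injective _ h)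
    · intro e he
      obtain ⟨k, hk, hk'⟩ := Finset.mem_image.1 (hfH e he)
      have : (f e).map φ.symm.toEmbedding = k := by
        rw [← hk', Finset.map_map]
        ext x
        simp
      simp only [this]
      exact hk
    · intro u v huv
      obtain ⟨h1, h2⟩ := hm u v huv
      exact ⟨Finset.mem_map_of_mem φ.symm.toEmbedding h1, Finset.mem_map_of_mem φ.symm.toEmbedding h2⟩

/-- First construction: all triples through a fixed vertex crossing a bipartition. -/
def H1 (t : ℕ) : Finset (Finset (Option (Fin 2 × Fin t))) :=
  (Finset.univ : Finset (Fin t × Fin t)).image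
    (fun p => {none, some (0, p.1), some (1, p.2)})

/-- Second construction: all triples `{a_i, b_i, c_j}`. -/
def H2 (t : ℕ) : Finset (Finset (Fin 3 × Fin t)) :=
  (Finset.univ : Finset (Fin t × Fin t)).image
    (fun p => {(0, p.1), (1, p.1), (2, p.2)})

lemma H1_card (t : ℕ) : t ^ 2 ≤ (covPairs (H1 t)).card := by
  have : ((Finset.univ : Finset (Fin t × Fin t)).image
      (fun p => ({some (0, p.1), some (1, p.2)} : Finset (Option (Fin 2 × Fin t))))).card = t ^ 2 := by
    rw [Finset.card_image_of_injective]
    · simp [sq]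
    · rintro ⟨a, b⟩ ⟨a', b'⟩ h
      simp only at h
      have m1 : some (0, a) ∈ ({some (0, a'), some (1, b')} : Finset (Option (Fin 2 × Fin t))) := by
        rw [← h]; simp
      have m2 : some (1, b) ∈ ({some (0, a'), some (1, b')} : Finset (Option (Fin 2 × Fin t))) := by
        rw [← h]; simp
      simp at m1 m2
      rw [m1, m2]
  rw [← this]
  refine Finset.card_le_card ?_
  intro p hp
  obtain ⟨⟨a, b⟩, -, rfl⟩ := Finset.mem_image.1 hp
  refine Finset.mem_biUnion.2 ⟨_, Finset.mem_image.2 ⟨(a, b), Finset.mem_univ _, rfl⟩,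
    Finset.mem_powersetCard.2 ⟨?_, ?_⟩⟩
  · intro x hx
    simp at hx ⊢
    tauto
  · rw [Finset.card_pair]; simp

lemma H2_card (t : ℕ) : t ^ 2 ≤ (covPairs (H2 t)).card := by
  have : ((Finset.univ : Finset (Fin t × Fin t)).image
      (fun p => ({(0, p.1), (2, p.2)} : Finset (Fin 3 × Fin t)))).card = t ^ 2 := by
    rw [Finset.card_image_of_injective]
    · simp [sq]
    · rintro ⟨a, b⟩ ⟨a', b'⟩ h
      simp only at h
      have m1 : (0, a) ∈ ({(0, a'), (2, b')} : Finset (Fin 3 × Fin t)) := by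
        rw [← h]; simp
      have m2 : (2, b) ∈ ({(0, a'), (2, b')} : Finset (Fin 3 × Fin t)) := by
        rw [← h]; simp
      simp at m1 m2
      rw [m1, m2]
  rw [← this]
  refine Finset.card_le_card ?_
  intro p hp
  obtain ⟨⟨a, b⟩, -, rfl⟩ := Finset.mem_image.1 hp
  refine Finset.mem_biUnion.2 ⟨_, Finset.mem_image.2 ⟨(a, b), Finset.mem_univ _, rfl⟩,
    Finset.mem_powersetCard.2 ⟨?_, ?_⟩⟩
  · intro x hx
    simp at hx ⊢
    tauto
  · rw [Finset.card_pair]; simp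

lemma H1_unif (t : ℕ) : ∀ h ∈ H1 t, h.card = 3 := by
  intro h hh
  obtain ⟨⟨a, b⟩, -, rfl⟩ := Finset.mem_image.1 hh
  exact Finset.card_eq_three.2 ⟨_, _, _, by simp, by simp, by simp, rfl⟩

lemma H2_unif (t : ℕ) : ∀ h ∈ H2 t, h.card = 3 := by
  intro h hh
  obtain ⟨⟨a, b⟩, -, rfl⟩ := Finset.mem_image.1 hh
  exact Finset.card_eq_three.2 ⟨_, _, _, by simp, by simp, by simp, rfl⟩

lemma H2_berge {α : Type*} (G : SimpleGraph α) (t : ℕ) (h : HasBergeCopy G (H2 t)) :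
    (∃ f : G →g C3BlowupM t, Function.Injective f) ∧
    (∀ x y z, G.Adj x y → G.Adj y z → G.Adj x z → False) := by
  obtain ⟨i, f, hi, hf, hfH, hm⟩ := h
  have key : ∀ u v, G.Adj u v → ∃ a b, f s(u, v) = {(0, a), (1, a), (2, b)} ∧
      i u ∈ ({(0, a), (1, a), (2, b)} : Finset (Fin 3 × Fin t)) ∧
      i v ∈ ({(0, a), (1, a), (2, b)} : Finset (Fin 3 × Fin t)) := by
    intro u v huv
    obtain ⟨⟨a, b⟩, -, h⟩ := Finset.mem_image.1 (hfH _ ((SimpleGraph.mem_edgeSet G).2 huv))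
    simp only at h
    have := hm u v huv
    rw [← h] at this
    exact ⟨a, b, h.symm, this⟩
  have hhom : ∀ u v, G.Adj u v → (C3BlowupM t).Adj (i u) (i v) := by
    intro u v huv
    have hne : i u ≠ i v := fun h => huv.ne (hi h)
    obtain ⟨a, b, -, h1, h2⟩ := key u v huv
    simp only [Finset.mem_insert, Finset.mem_singleton] at h1 h2
    simp only [C3BlowupM, SimpleGraph.fromRel_adj]
    refine ⟨hne, ?_⟩
    rcases h1 with h1 | h1 | h1 <;> rcases h2 with h2 | h2 | h2 <;> rw [h1, h2] at hne ⊢ <;>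
      simp at hne ⊢
  refine ⟨⟨⟨i, fun {u v} h => hhom u v h⟩, hi⟩, ?_⟩
  -- the two edges at the vertex in the third class use the same hyperedge
  have same : ∀ x y z, G.Adj x z → G.Adj y z → (i z).1 = 2 → (i x).2 = (i y).2 → (i x).1 ≠ 2 →
      (i y).1 ≠ 2 → x = y := by
    intro x y z h1 h2 hz hxy hx hy
    obtain ⟨a, b, e1, m1, m2⟩ := key x z h1
    obtain ⟨a', b', e2, m1', m2'⟩ := key y z h2
    have ha : (i x).2 = a := by
      simp only [Finset.mem_insert, Finset.mem_singleton] at m1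
      rcases m1 with h | h | h <;> rw [h] at hx ⊢
      simp at hx
    have ha' : (i y).2 = a' := by
      simp only [Finset.mem_insert, Finset.mem_singleton] at m1'
      rcases m1' with h | h | h <;> rw [h] at hy ⊢
      simp at hy
    have hb : (i z).2 = b := by
      simp only [Finset.mem_insert, Finset.mem_singleton] at m2
      rcases m2 with h | h | h <;> rw [h] at hz ⊢ <;> simp at hz
    have hb' : (i z).2 = b' := by
      simp only [Finset.mem_insert, Finset.mem_singleton] at m2'
      rcases m2' with h | h | h <;> rw [h] at hz ⊢ <;> simp at hz
    have : f s(x, z) = f s(y, z) := by rw [e1, e2, ← ha, ← ha', ← hb, ← hb', hxy]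
    have := hf ((SimpleGraph.mem_edgeSet G).2 h1) ((SimpleGraph.mem_edgeSet G).2 h2) this
    rcases Sym2.eq_iff.1 this with ⟨h, _⟩ | ⟨h, h'⟩
    · exact h
    · exact absurd h h1.ne
  have adj : ∀ u v, G.Adj u v → (i u).1 ≠ (i v).1 ∧
      ((i u).1 ≠ 2 → (i v).1 ≠ 2 → (i u).2 = (i v).2) := by
    intro u v huv
    have := hhom u v huv
    simp only [C3BlowupM, SimpleGraph.fromRel_adj] at this
    obtain ⟨-, h⟩ := this
    constructor
    · rcases h with h | h <;> omega
    · intro h1 h2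
      rcases h with (h | h | h) | (h | h | h)
      · exact absurd h.2 h2
      · exact absurd h.2 h2
      · exact h.2.2
      · exact absurd h.2 h1
      · exact absurd h.2 h1
      · exact h.2.2.symm
  intro x y z hxy hyz hxz
  have a1 := adj x y hxy
  have a2 := adj y z hyz
  have a3 := adj x z hxz
  by_cases hz : (i z).1 = 2
  · have hx : (i x).1 ≠ 2 := by omega
    have hy : (i y).1 ≠ 2 := by omega
    exact hxy.ne (same x y z hxz hyz hz (a1.2 hx hy) hx hy)
  by_cases hy : (i y).1 = 2
  · have hx : (i x).1 ≠ 2 := by omega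
    exact hxz.ne (same x z y hxy hyz.symm hy (a3.2 hx hz) hx hz)
  by_cases hx : (i x).1 = 2
  · exact hyz.ne (same y z x hxy.symm hxz.symm hx (a2.2 hy hz) hy hz)
  omega

lemma H1_berge {α : Type*} (G : SimpleGraph α) (t : ℕ) (h : HasBergeCopy G (H1 t))
    (htri : ∀ x y z, G.Adj x y → G.Adj y z → G.Adj x z → False) :
    ∃ f : G →g C5Blowup t, Function.Injective f := by
  classical
  obtain ⟨i, f, hi, hf, hfH, hm⟩ := h
  have key : ∀ u v, G.Adj u v → ∃ a b, 
      i u ∈ ({none, some (0, a), some (1, b)} : Finset (Option (Fin 2 × Fin t))) ∧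
      i v ∈ ({none, some (0, a), some (1, b)} : Finset (Option (Fin 2 × Fin t))) := by
    intro u v huv
    obtain ⟨⟨a, b⟩, -, h⟩ := Finset.mem_image.1 (hfH _ ((SimpleGraph.mem_edgeSet G).2 huv))
    simp only at h
    have := hm u v huv
    rw [← h] at this
    exact ⟨a, b, this⟩
  let N : α → Prop := fun u => ∃ w, i w = none ∧ G.Adj w u
  let P : Option (Fin 2 × Fin t) → Prop → Unit ⊕ Fin 4 × Fin t := fun o q =>
    match o with
    | none => Sum.inl ()
    | some (k, j) => Sum.inr (if k = 0 then (if q then 0 else 2) else (if q then 3 else 1), j)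
  have hN : ∀ u v, G.Adj u v → N u → N v → False := by
    rintro u v huv ⟨w, hw, hwu⟩ ⟨w', hw', hwv⟩
    have : w = w' := hi (hw.trans hw'.symm)
    subst this
    exact htri w u v hwu huv hwv
  have main : ∀ u v, G.Adj u v → (C5Blowup t).Adj (P (i u) (N u)) (P (i v) (N v)) := by
    intro u v huv
    have hne : i u ≠ i v := fun h => huv.ne (hi h)
    obtain ⟨a, b, h1, h2⟩ := key u v huv
    simp only [Finset.mem_insert, Finset.mem_singleton] at h1 h2
    have hNN := hN u v huv
    have hv0 : i u = none → N v := fun h => ⟨u, h, huv⟩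
    have hu0 : i v = none → N u := fun h => ⟨v, h, huv.symm⟩
    generalize N u = A at *
    generalize N v = B at *
    rcases h1 with h1 | h1 | h1 <;> rcases h2 with h2 | h2 | h2 <;>
      rw [h1, h2] at hne <;> simp only [h1, h2] at hv0 hu0 ⊢ <;> by_cases hA : A <;>
      by_cases hB : B <;>
      simp [P, C5Blowup, hA, hB] at hne hv0 hu0 hNN ⊢
  refine ⟨⟨fun u => P (i u) (N u), fun {u v} h => main u v h⟩, ?_⟩
  intro u v huv
  apply hi
  change P (i u) (N u) = P (i v) (N v) at huv
  generalize N u = A at *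
  generalize N v = B at *
  rcases hu : i u with _ | ⟨k, j⟩ <;> rcases hv : i v with _ | ⟨l, j'⟩ <;> rw [hu, hv] at huv
  · simp [P] at huv
  · simp [P] at huv
  · by_cases hA : A <;> by_cases hB : B <;> fin_cases k <;> fin_cases l <;>
      simp [P, hA, hB] at huv ⊢ <;> exact huv

theorem stmt7 {α : Type*} [Fintype α] (G : SimpleGraph α) :
    coverTuranDensity 3 G = 0 ↔
      ∃ s : ℕ, 0 < s ∧
        (∃ f : G →g C5Blowup s, Function.Injective f) ∧
        (∃ f : G →g C3BlowupM s, Function.Injective f) := by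
  have hbd : ∀ n : ℕ, (coverTuranNumber {3} n G : ℝ) / (n.choose 2 : ℝ) ≤ 1 := by
    intro n
    refine div_le_one_of_le₀ ?_ (by positivity)
    exact_mod_cast ctn_le n {3} G
  constructor
  · intro h
    have hev : ∀ᶠ n : ℕ in Filter.atTop,
        (coverTuranNumber {3} n G : ℝ) / (n.choose 2 : ℝ) < 1 / 10 := by
      refine Filter.eventually_lt_of_limsup_lt ?_ ?_
      · unfold coverTuranDensity at h
        rw [h]; norm_num
      · exact Filter.isBoundedUnder_of ⟨1, hbd⟩
    obtain ⟨n0, hn0⟩ := Filter.eventually_atTop.1 hev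
    set t := n0 + 1 with ht
    have small : ∀ n, n0 ≤ n → 2 ≤ n → n ≤ 3 * t → coverTuranNumber {3} n G < t ^ 2 := by
      intro n h1 h2 h3
      have := hn0 n h1
      have hpos : (0 : ℝ) < n.choose 2 := by exact_mod_cast Nat.choose_pos h2
      rw [div_lt_iff₀ hpos, Nat.cast_choose_two] at this
      have h3' : (n : ℝ) ≤ 3 * t := by exact_mod_cast h3
      have h2' : (2 : ℝ) ≤ n := by exact_mod_cast h2
      have : (coverTuranNumber {3} n G : ℝ) < (t : ℝ) ^ 2 := by nlinarith
      exact_mod_cast this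
    have hB2 : HasBergeCopy G (H2 t) := by
      by_contra hb
      have h1 := le_ctn G (H2 t) (H2_unif t) hb
      have h2 := H2_card t
      have h3 := small (Fintype.card (Fin 3 × Fin t)) (by simp; omega) (by simp; omega) (by simp)
      omega
    have hB1 : HasBergeCopy G (H1 t) := by
      by_contra hb
      have h1 := le_ctn G (H1 t) (H1_unif t) hb
      have h2 := H1_card t
      have h3 := small (Fintype.card (Option (Fin 2 × Fin t))) (by simp; omega) (by simp; omega)
        (by simp; omega)
      omega
    obtain ⟨h3, htri⟩ := H2_berge G t hB2
    exact ⟨t, by omega, H1_berge G t hB1 htri, h3⟩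
  · rintro ⟨s, -, ⟨g5, hg5⟩, ⟨g3, hg3⟩⟩
    refine Filter.Tendsto.limsup_eq ?_
    rw [Metric.tendsto_atTop]
    intro ε hε
    obtain ⟨n0, hn0⟩ := upper (ε / 8) (by positivity) G s g5 hg5 g3 hg3
    refine ⟨n0 + 2, fun n hn => ?_⟩
    rw [Real.dist_eq, sub_zero, abs_of_nonneg (by positivity)]
    have hpos : (0 : ℝ) < n.choose 2 := by exact_mod_cast Nat.choose_pos (by omega)
    rw [div_lt_iff₀ hpos, Nat.cast_choose_two]
    have hn2 : (2 : ℝ) ≤ n := by exact_mod_cast (by omega : 2 ≤ n)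
    have hle : (coverTuranNumber {3} n G : ℝ) ≤ ε / 8 * (n : ℝ) ^ 2 := by
      rcases Set.eq_empty_or_nonempty { m | ∃ H : Finset (Finset (Fin n)),
        (∀ h ∈ H, h.card ∈ ({3} : Set ℕ)) ∧ ¬ HasBergeCopy G H ∧ m = (covPairs H).card } with he | he
      · unfold coverTuranNumber
        rw [he]
        simp only [csSup_empty, Nat.bot_eq_zero, Nat.cast_zero]
        positivity
      · obtain ⟨H, h1, h2, h3⟩ := Nat.sSup_mem he (bdd_ctn n {3} G)
        unfold coverTuranNumber
        rw [h3]
        by_contra hcon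
        push Not at hcon
        exact h2 (hn0 n (by omega) H (by simpa using h1) hcon.le)
    refine hle.trans_lt ?_
    have : (n : ℝ) ^ 2 / 8 < n * (n - 1) / 2 := by nlinarith
    calc ε / 8 * (n : ℝ) ^ 2 = ε * ((n : ℝ) ^ 2 / 8) := by ring
      _ < _ := by gcongr
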